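/- For N = 2, the 8×8 R-matrix with entries given by R_{i₁,i₂,i₃}^{j₁,j₂,j₃} = δ_{i₂+i₃,j₂+j₃} (-1)^{(j₁-i₁)j₃} W_{p₁}(i₂-i₁)W_{p₂}(j₂-j₁)/(W_{p₃}(j₂-i₁)W_{p₄}(i₂-j₁)), expressed in the variables Y_k = y_k/(1+x_k), has determinant (Y₁ Y₂ (Y₃²+1)(Y₄²-1)/(Y₃²Y₄²))⁴. -/

import Mathlib

/-!
The entry of `R` at `(i₁, i₂, i₃), (j₁, j₂, j₃)` vanishes unless the charge `i₂ + i₃` is conserved,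
and otherwise it is unchanged when `i₁, i₂, j₁, j₂` are all shifted by the same amount. The shift by
the charge `q` identifies the sector of charge `q` with that of charge `0`, so `det R` is the
`N`-th power of the determinant of one `N² × N²` matrix. In that matrix `W₁` scales the rows and
`W₂` the columns, and what remains is `U i s * M s r j` in row `(i, r)` and column `(j, s)`: a
product of two block diagonal matrices up to a transposition of the tensor factors. For `N = 2` the
blocks `U` and `M s` have determinants `-(1 + Y₃⁻²)` and `±(1 - Y₄⁻²)`, and all signs cancel in the
outer square.
-/

open Equiv Matrix

section Interlaced

variable {n R : Type*} [CommRing R]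

/-- The matrix acting by `U` on one tensor factor and by `M s` on the other, where `s` is the column
index of `U`. The columns are indexed by `(j, s)` rather than `(s, j)`, as in `chargeSector`. -/
def interlaced (U : Matrix n n R) (M : n → Matrix n n R) : Matrix (n × n) (n × n) R :=
  of fun (i, r) (j, s) => U i s * M s r j

variable [Fintype n] [DecidableEq n] (U : Matrix n n R) (M : n → Matrix n n R)

lemma interlaced_eq_blockDiagonal_mul :
    interlaced U M =
      blockDiagonal (fun _ : n => U) * (blockDiagonal M).submatrix (prodComm n n) id := by
  ext ⟨i, r⟩ ⟨j, s⟩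
  simp [interlaced, mul_apply, Fintype.sum_prod_type, blockDiagonal_apply]

lemma det_interlaced :
    (interlaced U M).det =
      Perm.sign (prodComm n n) * U.det ^ Fintype.card n * ∏ s, (M s).det := by
  rw [interlaced_eq_blockDiagonal_mul, det_mul, det_permute, det_blockDiagonal,
    det_blockDiagonal, Finset.prod_const, Finset.card_univ]
  ring

end Interlaced

section Sectors

/-- The state `(i₁, i₂, i₃)` as its charge `q = i₂ + i₃` together with the index `(i, r)` of the
state `(i, -r, r)` of charge `0` obtained by shifting `i₁` and `i₂` by `-q`. -/
def chargeEquiv (A : Type*) [AddCommGroup A] : (A × A) × A ≃ A × A × A where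
  toFun := fun ((i, r), q) => (i + q, q - r, r)
  invFun := fun (i₁, i₂, i₃) => ((i₁ - (i₂ + i₃), i₃), i₂ + i₃)
  left_inv := fun ((i, r), q) => by simp
  right_inv := fun (i₁, i₂, i₃) => by simp

lemma prod_apply_neg_sub {A R : Type*} [AddGroup A] [Fintype A] [CommMonoid R] (W : A → R) :
    ∏ p : A × A, W (-p.2 - p.1) = (∏ a, W a) ^ Fintype.card A := by
  have inner (r : A) : ∏ i, W (-r - i) = ∏ a, W a := Equiv.prod_comp (Equiv.subLeft (-r)) W
  simp only [Fintype.prod_prod_type_right, inner, Finset.prod_const, Finset.card_univ]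

lemma prod_prod_addChar_mul {A R : Type*} [Semiring A] [Fintype A] [CommMonoid R]
    (ψ : AddChar A R) : ∏ s, ∏ j, ψ (j * s) = ψ ((∑ a, a) ^ 2) := by
  have map_sum (f : A → A) : ψ (∑ a, f a) = ∏ a, ψ (f a) :=
    map_prod ψ.toMonoidHom (fun a => Multiplicative.ofAdd (f a)) Finset.univ
  simp only [← map_sum, ← Finset.sum_mul]
  rw [← Finset.mul_sum, sq]

variable {A R : Type*} [Ring A] [CommRing R]

/-- The `R`-matrix with spins in `A` (the paper has `A = ℤ/N`). The character `ψ` stands for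
`n ↦ ω ^ n`, and `V₃`, `V₄` stand for the reciprocals of the weights `W_{p₃}`, `W_{p₄}`. -/
def rMatrix [DecidableEq A] (ψ : AddChar A R) (W₁ W₂ V₃ V₄ : A → R) :
    Matrix (A × A × A) (A × A × A) R :=
  of fun (i₁, i₂, i₃) (j₁, j₂, j₃) =>
    if i₂ + i₃ = j₂ + j₃ then
      ψ ((j₁ - i₁) * j₃) * (W₁ (i₂ - i₁) * W₂ (j₂ - j₁) * (V₃ (j₂ - i₁) * V₄ (i₂ - j₁)))
    else 0

/-- The block of `rMatrix` on the states `(i, -r, r)` of charge `0`, indexed by `(i, r)`. -/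
def chargeSector (ψ : AddChar A R) (W₁ W₂ V₃ V₄ : A → R) : Matrix (A × A) (A × A) R :=
  of fun (i, r) (j, s) =>
    ψ ((j - i) * s) * (W₁ (-r - i) * W₂ (-s - j) * (V₃ (-s - i) * V₄ (-r - j)))

variable (ψ : AddChar A R) (W₁ W₂ V₃ V₄ : A → R)

lemma rMatrix_submatrix_chargeEquiv [DecidableEq A] :
    (rMatrix ψ W₁ W₂ V₃ V₄).submatrix (chargeEquiv A) (chargeEquiv A) =
      blockDiagonal fun _ : A => chargeSector ψ W₁ W₂ V₃ V₄ := by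
  ext ⟨⟨i, r⟩, q⟩ ⟨⟨j, s⟩, q'⟩
  obtain rfl | hq := eq_or_ne q q'
  · have shift (a b : A) : q - a - (b + q) = -a - b := by abel
    simp [rMatrix, chargeSector, chargeEquiv, shift]
  · simp [rMatrix, chargeEquiv, blockDiagonal_apply, hq]

lemma chargeSector_eq_mul [Fintype A] [DecidableEq A] :
    chargeSector ψ W₁ W₂ V₃ V₄ =
      diagonal (fun p => W₁ (-p.2 - p.1)) *
        interlaced (of fun i s => ψ (-(i * s)) * V₃ (-s - i))
          (fun s => of fun r j => ψ (j * s) * V₄ (-r - j)) *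
        diagonal (fun p => W₂ (-p.2 - p.1)) := by
  ext ⟨i, r⟩ ⟨j, s⟩
  have character : ψ ((j - i) * s) = ψ (j * s) * ψ (-(i * s)) := by
    rw [← AddChar.map_add_eq_mul, sub_mul, sub_eq_add_neg]
  simp only [chargeSector, interlaced, mul_diagonal, diagonal_mul, of_apply, character]
  ring

variable [Fintype A] [DecidableEq A]

lemma det_chargeSector :
    (chargeSector ψ W₁ W₂ V₃ V₄).det =
      (∏ a, W₁ a) ^ Fintype.card A *
        (Perm.sign (prodComm A A) *
          (of fun i s => ψ (-(i * s)) * V₃ (-s - i)).det ^ Fintype.card A *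
          (ψ ((∑ a, a) ^ 2) * (of fun r j => V₄ (-r - j)).det ^ Fintype.card A)) *
        (∏ a, W₂ a) ^ Fintype.card A := by
  have controlled (s : A) : (of fun r j => ψ (j * s) * V₄ (-r - j)).det =
      (∏ j, ψ (j * s)) * (of fun r j => V₄ (-r - j)).det :=
    det_mul_row (fun j => ψ (j * s)) (of fun r j => V₄ (-r - j))
  rw [chargeSector_eq_mul, det_mul, det_mul, det_diagonal, det_diagonal, det_interlaced,
    prod_apply_neg_sub, prod_apply_neg_sub, Fintype.prod_congr _ _ controlled,
    Finset.prod_mul_distrib, prod_prod_addChar_mul, Finset.prod_const, Finset.card_univ]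

lemma det_rMatrix :
    (rMatrix ψ W₁ W₂ V₃ V₄).det = (chargeSector ψ W₁ W₂ V₃ V₄).det ^ Fintype.card A := by
  rw [← det_submatrix_equiv_self (chargeEquiv A), rMatrix_submatrix_chargeEquiv,
    det_blockDiagonal, Finset.prod_const, Finset.card_univ]

end Sectors

section TwoStates

variable {R : Type*} [CommRing R]

/-- The character `n ↦ ω ^ n` of `ℤ/2` for `ω = -1`. -/
def signChar (R : Type*) [CommRing R] : AddChar (ZMod 2) R :=
  AddChar.zmodChar 2 (neg_one_sq (R := R))

lemma signChar_one : signChar R 1 = -1 := by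
  simp [signChar, AddChar.zmodChar_apply, ZMod.val_one]

/-- The Boltzmann weight on `ℤ/2` with `W(0) = 1` and `W(1) = t`. -/
def twoStateWeight (t : R) (n : ZMod 2) : R := if n = 0 then 1 else t

/-- The `R`-matrix for `N = 2`, where `v₃` and `v₄` stand for the inverses of `Y₃` and `Y₄`. -/
def rMatrixTwo (w₁ w₂ v₃ v₄ : R) :
    Matrix (ZMod 2 × ZMod 2 × ZMod 2) (ZMod 2 × ZMod 2 × ZMod 2) R :=
  rMatrix (signChar R) (twoStateWeight w₁) (twoStateWeight w₂) (twoStateWeight v₃)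
    (twoStateWeight v₄)

lemma twoStateWeight_zero (t : R) : twoStateWeight t 0 = 1 := rfl

lemma twoStateWeight_one (t : R) : twoStateWeight t 1 = t := rfl

lemma prod_twoStateWeight (t : R) : ∏ a, twoStateWeight t a = t :=
  (Fin.prod_univ_two (twoStateWeight t)).trans (one_mul t)

lemma det_zmod_two (B : Matrix (ZMod 2) (ZMod 2) R) : B.det = B 0 0 * B 1 1 - B 0 1 * B 1 0 :=
  det_fin_two B

lemma det_signChar_mul_twoStateWeight (t : R) :
    (of fun i s => signChar R (-(i * s)) * twoStateWeight t (-s - i)).det = -(1 + t ^ 2) := by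
  simp only [det_zmod_two, of_apply, mul_zero, mul_one, zero_add, add_zero, CharTwo.neg_eq,
    CharTwo.sub_eq_add, CharTwo.add_self_eq_zero, AddChar.map_zero_eq_one, signChar_one,
    twoStateWeight_zero, twoStateWeight_one]
  ring

lemma det_twoStateWeight (t : R) :
    (of fun r j => twoStateWeight t (-r - j)).det = 1 - t ^ 2 := by
  simp only [det_zmod_two, of_apply, zero_add, add_zero, CharTwo.neg_eq, CharTwo.sub_eq_add,
    CharTwo.add_self_eq_zero, twoStateWeight_zero, twoStateWeight_one]
  ring

lemma det_rMatrixTwo (w₁ w₂ v₃ v₄ : R) :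
    (rMatrixTwo w₁ w₂ v₃ v₄).det = (w₁ * w₂ * (1 + v₃ ^ 2) * (1 - v₄ ^ 2)) ^ 4 := by
  have sign_sq : ((Perm.sign (prodComm (ZMod 2) (ZMod 2)) : ℤ) : R) ^ 2 = 1 := by
    rw [← Int.cast_pow, ← Units.val_pow_eq_pow_val, Int.units_sq]
    simp
  have char_sum : signChar R ((∑ a, a) ^ 2) = -1 := signChar_one
  rw [rMatrixTwo, det_rMatrix, det_chargeSector, prod_twoStateWeight, prod_twoStateWeight,
    det_signChar_mul_twoStateWeight, det_twoStateWeight, char_sum, ZMod.card]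
  linear_combination (w₁ * w₂ * (1 + v₃ ^ 2) * (1 - v₄ ^ 2)) ^ 4 * sign_sq

/-- The enumeration of the states in which `(i₁, i₂, i₃)` has the index `i₁ + 2 i₂ + 4 i₃`, the
paper's index less `1`. -/
def stateEquiv : Fin 8 ≃ ZMod 2 × ZMod 2 × ZMod 2 where
  toFun := ![(0, 0, 0), (1, 0, 0), (0, 1, 0), (1, 1, 0), (0, 0, 1), (1, 0, 1), (0, 1, 1), (1, 1, 1)]
  invFun := fun (i₁, i₂, i₃) => Fin.ofNat 8 (i₁.val + 2 * i₂.val + 4 * i₃.val)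
  left_inv := by decide
  right_inv := by decide

end TwoStates

theorem det_R_N2_general {K : Type*} [Field K] (Y : Fin 4 → K) (hY2 : Y 2 ≠ 0) (hY3 : Y 3 ≠ 0)
    (Z13 Z14 Z23 Z24 Z12 Z34 : K)
    (h13 : Z13 = Y 0 / Y 2) (h14 : Z14 = Y 0 / Y 3)
    (h23 : Z23 = Y 1 / Y 2) (h24 : Z24 = Y 1 / Y 3)
    (h12 : Z12 = Y 0 * Y 1) (h34 : Z34 = 1 / (Y 2 * Y 3)) :
    Matrix.det
      !![(1 : K), Z24, 0, 0, 0, 0, Z23, -Z34;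
         Z13, Z13 * Z24, 0, 0, 0, 0, -Z12, Z14;
         0, 0, Z13 * Z24, Z13, Z14, -Z12, 0, 0;
         0, 0, Z24, 1, -Z34, Z23, 0, 0;
         0, 0, Z23, Z34, 1, -Z24, 0, 0;
         0, 0, Z12, Z14, -Z13, Z13 * Z24, 0, 0;
         Z14, Z12, 0, 0, 0, 0, Z13 * Z24, -Z13;
         Z34, Z23, 0, 0, 0, 0, -Z24, 1]
      = (Y 0 * Y 1 * ((Y 2) ^ 2 + 1) * ((Y 3) ^ 2 - 1) / ((Y 2) ^ 2 * (Y 3) ^ 2)) ^ 4 := by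
  subst h13 h14 h23 h24 h12 h34
  calc
    _ = ((rMatrixTwo (Y 0) (Y 1) (Y 2)⁻¹ (Y 3)⁻¹).submatrix stateEquiv stateEquiv).det := by
      rw [div_mul_div_comm]
      simp only [div_eq_mul_inv, mul_inv, one_mul]
      congr 1
      ext i j
      fin_cases i <;> fin_cases j <;>
        simp [rMatrixTwo, rMatrix, stateEquiv, twoStateWeight_zero, twoStateWeight_one,
          signChar_one, CharTwo.add_self_eq_zero, CharTwo.sub_eq_add]
    _ = (Y 0 * Y 1 * (1 + (Y 2)⁻¹ ^ 2) * (1 - (Y 3)⁻¹ ^ 2)) ^ 4 := by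
      rw [det_submatrix_equiv_self, det_rMatrixTwo]
    _ = _ := by field_simp

/-- For `N = 2`: with Fermat points `(x_k, y_k)`, `x_k² + y_k² = 1`, `x_k ≠ -1`,
subject to `x₁x₂ = -x₃x₄`, set `Y_k = y_k/(1+x_k)` and `Z_{ik} = Y_i/Y_k`
(`ik ∈ {13,14,23,24}`), `Z₁₂ = Y₁Y₂`, `Z₃₄ = 1/(Y₃Y₄)`. The explicit 8×8 R-matrix
has determinant `(Y₁Y₂(Y₃²+1)(Y₄²-1)/(Y₃²Y₄²))⁴`. -/
theorem det_R_N2 (x y : Fin 4 → ℂ)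
    (hferm : ∀ k, (x k) ^ 2 + (y k) ^ 2 = 1)
    (hx : ∀ k, x k ≠ -1) (hy : ∀ k, y k ≠ 0)
    (hcon : x 0 * x 1 = -(x 2 * x 3))
    (Y : Fin 4 → ℂ) (hY : ∀ k, Y k = y k / (1 + x k))
    (Z13 Z14 Z23 Z24 Z12 Z34 : ℂ)
    (h13 : Z13 = Y 0 / Y 2) (h14 : Z14 = Y 0 / Y 3)
    (h23 : Z23 = Y 1 / Y 2) (h24 : Z24 = Y 1 / Y 3)
    (h12 : Z12 = Y 0 * Y 1) (h34 : Z34 = 1 / (Y 2 * Y 3)) :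
    Matrix.det
      !![(1 : ℂ), Z24, 0, 0, 0, 0, Z23, -Z34;
         Z13, Z13 * Z24, 0, 0, 0, 0, -Z12, Z14;
         0, 0, Z13 * Z24, Z13, Z14, -Z12, 0, 0;
         0, 0, Z24, 1, -Z34, Z23, 0, 0;
         0, 0, Z23, Z34, 1, -Z24, 0, 0;
         0, 0, Z12, Z14, -Z13, Z13 * Z24, 0, 0;
         Z14, Z12, 0, 0, 0, 0, Z13 * Z24, -Z13;
         Z34, Z23, 0, 0, 0, 0, -Z24, 1]
      = (Y 0 * Y 1 * ((Y 2) ^ 2 + 1) * ((Y 3) ^ 2 - 1) / ((Y 2) ^ 2 * (Y 3) ^ 2)) ^ 4 := by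
  have hY_ne (k : Fin 4) : Y k ≠ 0 :=
    hY k ▸ div_ne_zero (hy k) fun h => hx k (eq_neg_of_add_eq_zero_right h)
  exact det_R_N2_general Y (hY_ne 2) (hY_ne 3) Z13 Z14 Z23 Z24 Z12 Z34 h13 h14 h23 h24 h12 h34
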